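/- arXiv:2012.14723 — 2 statements merged into one kernel-verified Lean document; each statement's English description precedes it below -/
import Mathlib

section
/- Let T : ℂ((ν)) → ℂ((ν)) be the ℂ-linear operator Tg := ν^{−1}·(dg/dν). A formal Laurent series g ∈ ℂ((ν)) belongs to the ℂ-linear span of the set { T^j f : j ≥ 0, f ∈ ℂ[[ν]] } if and only if the coefficient of ν^{−n} in g vanishes for every even integer n ≥ 2, i.e., if and only if the principal part of g is an odd series in ν. -/
/-- The termwise formal derivative `d/dν` on `ℂ((ν))`: the coefficient of `ν^n` in `dg/dν`
is `(n+1)·g_{n+1}`. -/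
noncomputable def lderiv (g : LaurentSeries ℂ) : LaurentSeries ℂ where
  coeff n := (n + 1 : ℤ) • g.coeff (n + 1)
  isPWO_support' := by
    have hsub : Function.support (fun n : ℤ => (n + 1 : ℤ) • g.coeff (n + 1)) ⊆
        (fun m : ℤ => m - 1) '' Function.support g.coeff := by
      intro n hn
      refine ⟨n + 1, ?_, by ring⟩
      intro h
      apply hn
      simp [Function.mem_support, h]
    exact ((g.isPWO_support).image_of_monotone
      (fun a b hab => by simpa using sub_le_sub_right hab 1)).mono hsub

/-- Multiplication by `ν⁻¹` composed with `d/dν`, i.e. `T g = ν⁻¹·(dg/dν)`. -/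
noncomputable def Tnu (g : LaurentSeries ℂ) : LaurentSeries ℂ :=
  HahnSeries.single (-1 : ℤ) (1 : ℂ) * lderiv g

/-!
The operator `T = ν⁻¹ d/dν` sends `νᵐ` to `m νᵐ⁻²`. It shifts exponents by `2` and kills the
constant term, so it preserves the vanishing of the coefficients of `ν⁻², ν⁻⁴, …`. Conversely, such
a series `g` is `T` of the antiderivative of `ν g`, which again has this property and has pole order
smaller by `2`. After finitely many antiderivatives a power series is reached, so every such `g` is
a single iterate `T^j f`, and the span adds nothing.
-/

open scoped LaurentSeries

section Semiring

variable {R : Type*} [Semiring R]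

theorem exists_ofPowerSeries_eq_of_coeff_eq_zero {g : R⸨X⸩} (hg : ∀ m < 0, g.coeff m = 0) :
    ∃ f : PowerSeries R, HahnSeries.ofPowerSeries ℤ R f = g := by
  refine ⟨PowerSeries.mk fun n => g.coeff n, ?_⟩
  ext m
  rcases lt_or_ge m 0 with hneg | hnonneg
  · rw [PowerSeries.coeff_coe, if_pos hneg, hg m hneg]
  · lift m to ℕ using hnonneg
    rw [LaurentSeries.coeff_coe_powerSeries, PowerSeries.coeff_mk]

variable (R) in
/-- The Laurent series whose principal part is odd, encoded as the vanishing of the coefficients of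
`ν⁻², ν⁻⁴, …`; over a `ℚ`-algebra these are exactly the iterates `T^j f`. -/
def oddPrincipalPart : Submodule R R⸨X⸩ where
  carrier := {g | ∀ n : ℤ, 2 ≤ n → Even n → g.coeff (-n) = 0}
  zero_mem' n _ _ := HahnSeries.coeff_zero
  add_mem' hg hh n hn heven := by
    rw [HahnSeries.coeff_add, hg n hn heven, hh n hn heven, add_zero]
  smul_mem' c g hg n hn heven := by
    rw [HahnSeries.coeff_smul, hg n hn heven, smul_zero]

theorem mem_oddPrincipalPart {g : R⸨X⸩} :
    g ∈ oddPrincipalPart R ↔ ∀ n : ℤ, 2 ≤ n → Even n → g.coeff (-n) = 0 :=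
  Iff.rfl

theorem ofPowerSeries_mem_oddPrincipalPart (f : PowerSeries R) :
    HahnSeries.ofPowerSeries ℤ R f ∈ oddPrincipalPart R := fun n hn _ => by
  rw [PowerSeries.coeff_coe, if_pos (by lia)]

end Semiring

section Ring

variable {R : Type*} [Ring R]

/-- The operator `ν⁻¹ · d/dν` on Laurent series in `ν`; it is `Tnu` for `R = ℂ`. -/
noncomputable def invMulDerivative (g : R⸨X⸩) : R⸨X⸩ :=
  HahnSeries.single (-1 : ℤ) (1 : R) * LaurentSeries.derivative R g

theorem coeff_invMulDerivative (g : R⸨X⸩) (n : ℤ) :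
    (invMulDerivative g).coeff n = (n + 2) • g.coeff (n + 2) := by
  have hshift : n + 1 + 1 = n + 2 := by ring
  simp only [invMulDerivative, HahnSeries.coeff_single_mul, LaurentSeries.derivative_apply,
    LaurentSeries.hasseDeriv_coeff, Ring.choose_one_right, Nat.cast_one, sub_neg_eq_add, one_mul,
    hshift]

theorem invMulDerivative_mem_oddPrincipalPart {g : R⸨X⸩} (hg : g ∈ oddPrincipalPart R) :
    invMulDerivative g ∈ oddPrincipalPart R := fun n hn heven => by
  rw [coeff_invMulDerivative]
  obtain rfl | hne := eq_or_ne n 2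
  · rw [neg_add_cancel, zero_smul]
  · have hle : 2 ≤ n - 2 := by grind
    have hcoeff : g.coeff (-(n - 2)) = 0 := hg (n - 2) hle (heven.sub even_two)
    rw [show -n + 2 = -(n - 2) by ring, hcoeff, smul_zero]

theorem iterate_invMulDerivative_mem_oddPrincipalPart {g : R⸨X⸩} (hg : g ∈ oddPrincipalPart R)
    (j : ℕ) : invMulDerivative^[j] g ∈ oddPrincipalPart R :=
  Set.MapsTo.iterate (s := (oddPrincipalPart R : Set R⸨X⸩))
    (fun _ => invMulDerivative_mem_oddPrincipalPart) j hg

end Ring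

section RatModule

variable {V : Type*} [AddCommGroup V] [Module ℚ V]

/-- The formal antiderivative of `ν g`, a preimage of `g` under `ν⁻¹ · d/dν` when `g` has no `ν⁻²`
term. The convention `0⁻¹ = 0` makes its constant term vanish and discards the `ν⁻²` term of `g`. -/
noncomputable def antiderivativeMulVar (g : V⸨X⸩) : V⸨X⸩ :=
  HahnSeries.ofSuppBddBelow (fun n : ℤ => (n : ℚ)⁻¹ • g.coeff (n - 2)) <| by
    refine ⟨g.order + 2, fun m hm => ?_⟩
    have hcoeff : g.coeff (m - 2) ≠ 0 := right_ne_zero_of_smul hm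
    linarith [HahnSeries.order_le_of_coeff_ne_zero hcoeff]

theorem coeff_antiderivativeMulVar (g : V⸨X⸩) (n : ℤ) :
    (antiderivativeMulVar g).coeff n = (n : ℚ)⁻¹ • g.coeff (n - 2) :=
  rfl

end RatModule

section RatAlgebra

variable {R : Type*} [Ring R] [Algebra ℚ R]

theorem invMulDerivative_antiderivativeMulVar {g : R⸨X⸩} (hg : g.coeff (-2) = 0) :
    invMulDerivative (antiderivativeMulVar g) = g := by
  ext n
  rw [coeff_invMulDerivative, coeff_antiderivativeMulVar, add_sub_cancel_right]
  obtain rfl | hne := eq_or_ne n (-2)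
  · rw [hg, smul_zero, smul_zero]
  · have hcast : ((n + 2 : ℤ) : ℚ) ≠ 0 := by
      rw [Int.cast_ne_zero]
      lia
    rw [← Int.cast_smul_eq_zsmul ℚ, smul_inv_smul₀ hcast]

theorem antiderivativeMulVar_mem_oddPrincipalPart {g : R⸨X⸩} (hg : g ∈ oddPrincipalPart R) :
    antiderivativeMulVar g ∈ oddPrincipalPart R := fun n hn heven => by
  rw [coeff_antiderivativeMulVar, show -n - 2 = -(n + 2) by ring,
    hg (n + 2) (by lia) (heven.add even_two), smul_zero]

theorem exists_iterate_invMulDerivative_eq_of_coeff_eq_zero (N : ℕ) {g : R⸨X⸩}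
    (hg : g ∈ oddPrincipalPart R) (hpole : ∀ m : ℤ, m < -(2 * N) → g.coeff m = 0) :
    ∃ f : PowerSeries R, invMulDerivative^[N] (HahnSeries.ofPowerSeries ℤ R f) = g := by
  induction N generalizing g with
  | zero => exact exists_ofPowerSeries_eq_of_coeff_eq_zero (by simpa using hpole)
  | succ N ih =>
    have hpole_anti (m : ℤ) (hm : m < -(2 * N)) : (antiderivativeMulVar g).coeff m = 0 := by
      rw [coeff_antiderivativeMulVar, hpole (m - 2) (by lia), smul_zero]
    obtain ⟨f, hf⟩ := ih (antiderivativeMulVar_mem_oddPrincipalPart hg) hpole_anti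
    refine ⟨f, ?_⟩
    rw [Function.iterate_succ_apply', hf,
      invMulDerivative_antiderivativeMulVar (hg 2 le_rfl even_two)]

theorem mem_oddPrincipalPart_iff_exists_iterate {g : R⸨X⸩} :
    g ∈ oddPrincipalPart R ↔ ∃ (j : ℕ) (f : PowerSeries R),
      g = invMulDerivative^[j] (HahnSeries.ofPowerSeries ℤ R f) := by
  constructor
  · intro hg
    obtain ⟨f, hf⟩ := exists_iterate_invMulDerivative_eq_of_coeff_eq_zero (-g.order).toNat hg
      fun m hm => HahnSeries.coeff_eq_zero_of_lt_order (by lia)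
    exact ⟨_, f, hf.symm⟩
  · rintro ⟨j, f, rfl⟩
    exact iterate_invMulDerivative_mem_oddPrincipalPart (ofPowerSeries_mem_oddPrincipalPart f) j

theorem stmt_11_general (g : R⸨X⸩) :
    g ∈ Submodule.span R
        {h : R⸨X⸩ | ∃ (j : ℕ) (f : PowerSeries R),
          h = invMulDerivative^[j] (HahnSeries.ofPowerSeries ℤ R f)} ↔
      ∀ n : ℤ, 2 ≤ n → Even n → g.coeff (-n) = 0 := by
  have hset : {h : R⸨X⸩ | ∃ (j : ℕ) (f : PowerSeries R),
      h = invMulDerivative^[j] (HahnSeries.ofPowerSeries ℤ R f)} = oddPrincipalPart R :=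
    Set.ext fun _ => mem_oddPrincipalPart_iff_exists_iterate.symm
  rw [hset, Submodule.span_eq, mem_oddPrincipalPart]

end RatAlgebra

theorem Tnu_eq_invMulDerivative : Tnu = invMulDerivative := by
  funext g
  ext n
  simp [Tnu, lderiv, invMulDerivative, HahnSeries.coeff_single_mul]

/-- A Laurent series `g ∈ ℂ((ν))` lies in the `ℂ`-linear span of
`{ T^j f : j ≥ 0, f ∈ ℂ[[ν]] }` (where `T g = ν^{−1}·dg/dν`) if and only if the coefficient
of `ν^{−n}` in `g` vanishes for every even integer `n ≥ 2`, i.e. iff the principal part of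
`g` is odd. -/
theorem stmt_11 (g : LaurentSeries ℂ) :
    g ∈ Submodule.span ℂ
        { h : LaurentSeries ℂ |
          ∃ (j : ℕ) (f : PowerSeries ℂ), h = Tnu^[j] (HahnSeries.ofPowerSeries ℤ ℂ f) } ↔
      ∀ n : ℤ, 2 ≤ n → Even n → g.coeff (-n) = 0 := by
  rw [Tnu_eq_invMulDerivative]
  exact stmt_11_general g
end

section
/- Let B ∈ ℂ and let V ∈ ℂ(z) be a rational function that is regular at B with V(B) = 0 and V′(B) = −1 (i.e., V = −(z−B) + O((z−B)²) at B). Define the ℂ-linear operator 𝒟 : ℂ(z) → ℂ(z) by 𝒟f := V·f′. Then for every integer l ≥ 2 the rational function obtained by applying the composition (𝒟 − 1)∘(𝒟 − 2)∘⋯∘(𝒟 − (l−1)) — with (𝒟 − (l−1)) applied first — to (z−B)^{−(l−1)} is regular at z = B. -/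
/-- Derivative of a rational function, via the quotient rule on the reduced
numerator/denominator representation. -/
noncomputable def rderiv (f : RatFunc ℂ) : RatFunc ℂ :=
  algebraMap (Polynomial ℂ) (RatFunc ℂ)
      (Polynomial.derivative f.num * f.denom - f.num * Polynomial.derivative f.denom) /
    algebraMap (Polynomial ℂ) (RatFunc ℂ) f.denom ^ 2

/-- Successive application of the operators `(𝒟 − (l−1)), (𝒟 − (l−2)), …` to `base`,
where `𝒟 f = V·f′`:  `chainD V l base j` is the result of the first `j` applications,
so `chainD V l base (l−1)` is `((𝒟−1)∘(𝒟−2)∘⋯∘(𝒟−(l−1))) base` (rightmost first). -/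
noncomputable def chainD (V : RatFunc ℂ) (l : ℕ) (base : RatFunc ℂ) : ℕ → RatFunc ℂ
  | 0 => base
  | j + 1 => V * rderiv (chainD V l base j) - ((l - 1 - j : ℕ) : RatFunc ℂ) * chainD V l base j

/-!
Write `t = z - B` and let `A` be the ring of rational functions regular at `B`. The conditions on
`V` say that `V = t (t e - 1)` with `e ∈ A`. If `g = t ^ (n + 1) f` lies in `A`, then expanding `g′`
gives `t ^ n (V f′ - (n + 1) f) = (t e - 1) g′ - (n + 1) e g ∈ A`, so `𝒟 - (n + 1)` lowers a pole
order of at most `n + 1` to at most `n`.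
-/

theorem pow_mul_derivation_sub_mem {R K S : Type*} [CommSemiring R] [CommRing K] [Algebra R K]
    [SetLike S K] [SubringClass S K] (D : Derivation R K K) {A : S} (hDA : ∀ a ∈ A, D a ∈ A)
    {t e f : K} (ht : t ∈ A) (hDt : D t = 1) (he : e ∈ A) {n : ℕ} (hf : t ^ (n + 1) * f ∈ A) :
    t ^ n * (t * (t * e - 1) * D f - ((n + 1 : ℕ) : K) * f) ∈ A := by
  have hD : D (t ^ (n + 1) * f) = t ^ (n + 1) * D f + ((n + 1 : ℕ) : K) * t ^ n * f := by
    simp only [Derivation.leibniz, Derivation.leibniz_pow, hDt, smul_eq_mul, nsmul_eq_mul,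
      Nat.add_sub_cancel]
    ring
  have key : t ^ n * (t * (t * e - 1) * D f - ((n + 1 : ℕ) : K) * f) =
      (t * e - 1) * D (t ^ (n + 1) * f) - ((n + 1 : ℕ) : K) * (e * (t ^ (n + 1) * f)) := by
    rw [hD]
    ring
  rw [key]
  exact sub_mem (mul_mem (sub_mem (mul_mem ht he) (one_mem A)) (hDA _ hf))
    (mul_mem (natCast_mem A _) (mul_mem he hf))

section RegularAt

open Polynomial

variable {K : Type*} [Field K] {B : K}

/-- The `K[X]`-subalgebra of rational functions regular at `B`, i.e. the local ring of the affine
line at `B`. Regularity is read off the reduced denominator. -/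
def regularAt (B : K) : Subalgebra K[X] (RatFunc K) where
  carrier := {f | f.denom.eval B ≠ 0}
  mul_mem' {f g} hf hg h := mul_ne_zero hf hg <| by
    simpa only [eval_mul] using eval_eq_zero_of_dvd_of_eval_eq_zero (RatFunc.denom_mul_dvd f g) h
  add_mem' {f g} hf hg h := mul_ne_zero hf hg <| by
    simpa only [eval_mul] using eval_eq_zero_of_dvd_of_eval_eq_zero (RatFunc.denom_add_dvd f g) h
  algebraMap_mem' p := by simp

theorem mem_regularAt {f : RatFunc K} : f ∈ regularAt B ↔ f.denom.eval B ≠ 0 :=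
  Iff.rfl

theorem div_mem_regularAt (p : K[X]) {q : K[X]} (hq : q.eval B ≠ 0) :
    algebraMap K[X] (RatFunc K) p / algebraMap K[X] (RatFunc K) q ∈ regularAt B :=
  fun h => hq (eval_eq_zero_of_dvd_of_eval_eq_zero (RatFunc.denom_div_dvd p q) h)

theorem algebraMap_X_sub_C (B : K) :
    algebraMap K[X] (RatFunc K) (X - C B) = RatFunc.X - RatFunc.C B := by
  simp

theorem X_sub_C_mem_regularAt (B : K) : RatFunc.X - RatFunc.C B ∈ regularAt B :=
  algebraMap_X_sub_C B ▸ (regularAt B).algebraMap_mem _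

theorem eval_add_of_mem_regularAt {f g : RatFunc K} (hf : f ∈ regularAt B)
    (hg : g ∈ regularAt B) :
    (f + g).eval (RingHom.id K) B = f.eval (RingHom.id K) B + g.eval (RingHom.id K) B :=
  RatFunc.eval_add _ _ hf hg

theorem eval_X_sub_C_mul_of_mem_regularAt {f : RatFunc K} (hf : f ∈ regularAt B) :
    ((RatFunc.X - RatFunc.C B) * f).eval (RingHom.id K) B = 0 := by
  rw [RatFunc.eval_mul _ _ (X_sub_C_mem_regularAt B) hf, ← algebraMap_X_sub_C,
    RatFunc.eval_algebraMap]
  simp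

theorem exists_eq_X_sub_C_mul_of_eval_eq_zero {f : RatFunc K} (hf : f ∈ regularAt B)
    (hfB : f.eval (RingHom.id K) B = 0) :
    ∃ g ∈ regularAt B, f = (RatFunc.X - RatFunc.C B) * g := by
  have hroot : f.num.IsRoot B := by
    simpa [RatFunc.eval, mem_regularAt.mp hf] using hfB
  obtain ⟨p, hp⟩ := dvd_iff_isRoot.mpr hroot
  refine ⟨_, div_mem_regularAt p hf, ?_⟩
  rw [← algebraMap_X_sub_C, ← mul_div_assoc, ← map_mul, ← hp, RatFunc.num_div_denom]

end RegularAt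

section Rderiv

open Polynomial

theorem rderiv_div (p : ℂ[X]) {q : ℂ[X]} (hq : q ≠ 0) :
    rderiv (algebraMap ℂ[X] (RatFunc ℂ) p / algebraMap ℂ[X] (RatFunc ℂ) q) =
      algebraMap ℂ[X] (RatFunc ℂ) (derivative p * q - p * derivative q) /
        algebraMap ℂ[X] (RatFunc ℂ) q ^ 2 := by
  generalize hf : algebraMap ℂ[X] (RatFunc ℂ) p / algebraMap ℂ[X] (RatFunc ℂ) q = f
  have hcross : f.num * q = p * f.denom := (RatFunc.num_mul_eq_mul_denom_iff hq).mpr hf.symm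
  have hcross' : derivative f.num * q + f.num * derivative q =
      derivative p * f.denom + p * derivative f.denom := by
    simpa only [derivative_mul] using congrArg derivative hcross
  rw [rderiv, div_eq_div_iff (pow_ne_zero 2 (RatFunc.algebraMap_ne_zero f.denom_ne_zero))
    (pow_ne_zero 2 (RatFunc.algebraMap_ne_zero hq))]
  simp only [← map_pow, ← map_mul]
  refine congrArg _ ?_
  linear_combination
    (f.denom * q) * hcross' - (derivative q * f.denom + derivative f.denom * q) * hcross

theorem rderiv_algebraMap (p : ℂ[X]) :
    rderiv (algebraMap ℂ[X] (RatFunc ℂ) p) = algebraMap ℂ[X] (RatFunc ℂ) (derivative p) := by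
  simpa using rderiv_div p one_ne_zero

theorem rderiv_add (f g : RatFunc ℂ) : rderiv (f + g) = rderiv f + rderiv g := by
  induction f using RatFunc.induction_on with | f p q hq
  induction g using RatFunc.induction_on with | f r s hs
  have hq' := RatFunc.algebraMap_ne_zero hq
  have hs' := RatFunc.algebraMap_ne_zero hs
  rw [div_add_div _ _ hq' hs', ← map_mul, ← map_mul, ← map_mul, ← map_add,
    rderiv_div _ (mul_ne_zero hq hs), rderiv_div _ hq, rderiv_div _ hs]
  simp only [derivative_mul, map_add, map_sub, map_mul]
  field_simp
  ring

theorem rderiv_mul (f g : RatFunc ℂ) : rderiv (f * g) = f * rderiv g + g * rderiv f := by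
  induction f using RatFunc.induction_on with | f p q hq
  induction g using RatFunc.induction_on with | f r s hs
  have hq' := RatFunc.algebraMap_ne_zero hq
  have hs' := RatFunc.algebraMap_ne_zero hs
  rw [div_mul_div_comm, ← map_mul, ← map_mul,
    rderiv_div _ (mul_ne_zero hq hs), rderiv_div _ hq, rderiv_div _ hs]
  simp only [derivative_mul, map_add, map_sub, map_mul]
  field_simp
  ring

theorem rderiv_smul (c : ℂ) (f : RatFunc ℂ) : rderiv (c • f) = c • rderiv f := by
  rw [RatFunc.smul_eq_C_mul, RatFunc.smul_eq_C_mul, rderiv_mul, ← RatFunc.algebraMap_C,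
    rderiv_algebraMap, derivative_C, map_zero, mul_zero, add_zero]

/-- The map `rderiv` bundled as a `ℂ`-derivation of `ℂ(z)`, which makes the general Leibniz rules
for derivations available. -/
noncomputable def rderivDerivation : Derivation ℂ (RatFunc ℂ) (RatFunc ℂ) :=
  Derivation.mk'
    { toFun := rderiv
      map_add' := rderiv_add
      map_smul' := rderiv_smul }
    rderiv_mul

theorem rderiv_X_sub_C (B : ℂ) : rderiv (RatFunc.X - RatFunc.C B) = 1 := by
  rw [← algebraMap_X_sub_C, rderiv_algebraMap, derivative_X_sub_C, map_one]

theorem rderiv_mem_regularAt {B : ℂ} {f : RatFunc ℂ} (hf : f ∈ regularAt B) :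
    rderiv f ∈ regularAt B := by
  rw [rderiv, ← map_pow]
  exact div_mem_regularAt _ (by simpa only [eval_pow] using pow_ne_zero 2 hf)

theorem exists_eq_X_sub_C_mul_of_eval_rderiv_eq_neg_one {B : ℂ} {V : RatFunc ℂ}
    (hreg : V ∈ regularAt B) (hval : V.eval (RingHom.id ℂ) B = 0)
    (hder : (rderiv V).eval (RingHom.id ℂ) B = -1) :
    ∃ e ∈ regularAt B,
      V = (RatFunc.X - RatFunc.C B) * ((RatFunc.X - RatFunc.C B) * e - 1) := by
  obtain ⟨w, hw, rfl⟩ := exists_eq_X_sub_C_mul_of_eval_eq_zero hreg hval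
  have hwB : w.eval (RingHom.id ℂ) B = -1 := by
    rwa [rderiv_mul, rderiv_X_sub_C, mul_one,
      eval_add_of_mem_regularAt (mul_mem (X_sub_C_mem_regularAt B) (rderiv_mem_regularAt hw)) hw,
      eval_X_sub_C_mul_of_mem_regularAt (rderiv_mem_regularAt hw), zero_add] at hder
  have hwB' : (w + 1).eval (RingHom.id ℂ) B = 0 := by
    rw [eval_add_of_mem_regularAt hw (one_mem _), hwB, RatFunc.eval_one, neg_add_cancel]
  obtain ⟨e, he, hwe⟩ :=
    exists_eq_X_sub_C_mul_of_eval_eq_zero (add_mem hw (one_mem _)) hwB'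
  exact ⟨e, he, by rw [← hwe, add_sub_cancel_right]⟩

end Rderiv

theorem pow_mul_chainD_mem_regularAt {B : ℂ} {e f : RatFunc ℂ} (he : e ∈ regularAt B) {l : ℕ}
    (hf : (RatFunc.X - RatFunc.C B) ^ (l - 1) * f ∈ regularAt B) {n j : ℕ} (hnj : n + j = l - 1) :
    (RatFunc.X - RatFunc.C B) ^ n *
      chainD ((RatFunc.X - RatFunc.C B) * ((RatFunc.X - RatFunc.C B) * e - 1)) l f j
        ∈ regularAt B := by
  induction j generalizing n with
  | zero => simpa only [chainD, ← hnj, add_zero] using hf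
  | succ j ih =>
    rw [chainD, show l - 1 - j = n + 1 by lia]
    exact pow_mul_derivation_sub_mem rderivDerivation (fun _ => rderiv_mem_regularAt)
      (X_sub_C_mem_regularAt B) (rderiv_X_sub_C B) he (ih (by lia))

theorem stmt_15_general {B : ℂ} {V : RatFunc ℂ} (hreg : V ∈ regularAt B)
    (hval : V.eval (RingHom.id ℂ) B = 0) (hder : (rderiv V).eval (RingHom.id ℂ) B = -1)
    {l : ℕ} {f : RatFunc ℂ} (hf : (RatFunc.X - RatFunc.C B) ^ (l - 1) * f ∈ regularAt B) :
    chainD V l f (l - 1) ∈ regularAt B := by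
  obtain ⟨e, he, rfl⟩ := exists_eq_X_sub_C_mul_of_eval_rderiv_eq_neg_one hreg hval hder
  simpa only [pow_zero, one_mul] using pow_mul_chainD_mem_regularAt he hf (zero_add (l - 1))

/-- If `V ∈ ℂ(z)` is regular at `B` with `V(B) = 0` and `V′(B) = −1`, and `𝒟 f = V·f′`,
then for every `l ≥ 2` the rational function
`((𝒟−1)∘(𝒟−2)∘⋯∘(𝒟−(l−1))) ((z−B)^{−(l−1)})` is regular at `z = B`
(i.e. its reduced denominator does not vanish at `B`). -/
theorem stmt_15 (B : ℂ) (V : RatFunc ℂ)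
    (hreg : Polynomial.eval B V.denom ≠ 0)
    (hval : RatFunc.eval (RingHom.id ℂ) B V = 0)
    (hder : RatFunc.eval (RingHom.id ℂ) B (rderiv V) = -1)
    (l : ℕ) (hl : 2 ≤ l) :
    Polynomial.eval B
      (RatFunc.denom
        (chainD V l (((RatFunc.X - RatFunc.C B)⁻¹) ^ (l - 1)) (l - 1))) ≠ 0 := by
  have hX : RatFunc.X - RatFunc.C B ≠ 0 :=
    algebraMap_X_sub_C B ▸ RatFunc.algebraMap_ne_zero (Polynomial.X_sub_C_ne_zero B)
  refine stmt_15_general hreg hval hder ?_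
  rw [← mul_pow, mul_inv_cancel₀ hX, one_pow]
  exact one_mem _
end
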